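/- Let n ≥ 4. Suppose that for every symmetric Laurent polynomial g ∈ R_{n−2}^{S_{n−2}}, the element (∏_{1 ≤ i < j ≤ n−2} (1 − x_i x_j)) · g lies in the image ds_n(J_n). Then ds_n(J_n) = J_{n−2}, i.e. ds_n : J_n → J_{n−2} is surjective. -/

import Mathlib

/-!
Common setup: `R n` is the ring of Laurent polynomials
`ℤ[x₁^{±1}, …, xₙ^{±1}]`, realized as the group algebra over `ℤ` of the
group `ℤ^n` of exponent vectors (`AddMonoidAlgebra ℤ (Fin n → ℤ)`).
-/

noncomputable section

/-- The ring `Rₙ = ℤ[x₁^{±1}, …, xₙ^{±1}]` of Laurent polynomials in `n` variables. -/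
abbrev R (n : ℕ) : Type := AddMonoidAlgebra ℤ (Fin n → ℤ)

/-- The variable `xᵢ` of `R n` (`i` is a `0`-based index). -/
def X {n : ℕ} (i : Fin n) : R n := AddMonoidAlgebra.single (Pi.single i (1 : ℤ)) 1

/-- The inverse `xᵢ⁻¹` of the variable `xᵢ` of `R n`. -/
def Xinv {n : ℕ} (i : Fin n) : R n := AddMonoidAlgebra.single (Pi.single i (-1 : ℤ)) 1

/-- The action of a permutation `w` on exponent vectors. -/
def permExp {n : ℕ} (w : Equiv.Perm (Fin n)) : (Fin n → ℤ) →+ (Fin n → ℤ) :=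
  AddMonoidHom.mk' (fun m => m ∘ w.symm) (fun _ _ => rfl)

/-- The action of `w ∈ Sₙ` on `R n`, permuting the variables (`xᵢ ↦ x_{w i}`). -/
def permHom {n : ℕ} (w : Equiv.Perm (Fin n)) : R n →+* R n :=
  AddMonoidAlgebra.mapDomainRingHom ℤ (permExp w)

/-- `f` is a symmetric Laurent polynomial, i.e. `f ∈ Rₙ^{Sₙ}`. -/
def SymmP {n : ℕ} (f : R n) : Prop := ∀ w : Equiv.Perm (Fin n), permHom w f = f

/-- The map of exponent groups underlying the evaluation
`xᵢ ↦ xᵢ (1 ≤ i ≤ n-2), x_{n-1} ↦ t, xₙ ↦ t⁻¹`; the second coordinate of the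
target records the exponent of `t`. -/
def evExp (n : ℕ) : (Fin n → ℤ) →+ ((Fin (n - 2) → ℤ) × ℤ) :=
  AddMonoidHom.mk'
    (fun m => (fun i => m (Fin.castLE (Nat.sub_le n 2) i),
      if h : 2 ≤ n then m ⟨n - 2, by omega⟩ - m ⟨n - 1, by omega⟩ else 0))
    (by
      intro a b
      refine Prod.ext (funext fun i => rfl) ?_
      by_cases h : 2 ≤ n
      · simp [h]; ring
      · simp [h])

/-- The evaluation homomorphism
`evₙ : ℤ[x₁^{±1},…,xₙ^{±1}] → ℤ[x₁^{±1},…,x_{n-2}^{±1}, t^{±1}]` determined by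
`xᵢ ↦ xᵢ` for `1 ≤ i ≤ n-2`, `x_{n-1} ↦ t`, `xₙ ↦ t⁻¹`.  The target is realized
as the group algebra of `ℤ^{n-2} × ℤ`, the last factor recording the exponent
of `t`. -/
def ev (n : ℕ) : R n →+* AddMonoidAlgebra ℤ ((Fin (n - 2) → ℤ) × ℤ) :=
  AddMonoidAlgebra.mapDomainRingHom ℤ (evExp n)

/-- An element of `ℤ[x₁^{±1},…,x_{n-2}^{±1}, t^{±1}]` "does not involve `t`",
i.e. it lies in the image of the subring `ℤ[x₁^{±1},…,x_{n-2}^{±1}]`. -/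
def NoT (n : ℕ) (g : AddMonoidAlgebra ℤ ((Fin (n - 2) → ℤ) × ℤ)) : Prop :=
  g ∈ Set.range
    (AddMonoidAlgebra.mapDomainRingHom ℤ (AddMonoidHom.inl (Fin (n - 2) → ℤ) ℤ))

/-- `J n`: for `n ≥ 2`, the set of symmetric Laurent polynomials `f` such that
`evₙ f` does not involve `t`; for `n = 0, 1` it is all of `Rₙ^{Sₙ}`. -/
def J (n : ℕ) : Set (R n) := {f | SymmP f ∧ (2 ≤ n → NoT n (ev n f))}

/-- Restriction of exponent vectors to the first `n - 2` coordinates. -/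
def resExp (n : ℕ) : (Fin n → ℤ) →+ (Fin (n - 2) → ℤ) :=
  AddMonoidHom.mk' (fun m i => m (Fin.castLE (Nat.sub_le n 2) i)) (fun _ _ => rfl)

/-- The ring homomorphism `R n → R (n-2)` which, on `J n`, is the
Duflo–Serganova map `dsₙ`: for `f ∈ J n` it is exactly `evₙ f` regarded as an
element of `ℤ[x₁^{±1},…,x_{n-2}^{±1}]` (the `t`-degree-`0` part of `evₙ f`). -/
def ds (n : ℕ) : R n →+* R (n - 2) :=
  AddMonoidAlgebra.mapDomainRingHom ℤ (resExp n)

/-- The product `∏_{1 ≤ i < j ≤ n} (1 - xᵢ xⱼ)`. -/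
def P (n : ℕ) : R n :=
  ∏ p ∈ Finset.univ.filter (fun p : Fin n × Fin n => p.1 < p.2), (1 - X p.1 * X p.2)

/-!
For `f` symmetric in `N` variables put
`Γₖ f = ∑ᵢ xᵢᵏ f(x_j : j ≠ i) ∏_{j ≠ i} (1 - xᵢ xⱼ) / (xᵢ - xⱼ)`, which is a symmetric Laurent
polynomial in `N + 1` variables because its product with the Vandermonde determinant is alternating.
When the last two variables are specialized to `t` and `t⁻¹`, the two summands belonging to them
vanish, since `1 - t t⁻¹ = 0`, and in every other summand the two factors belonging to them cancel,
since `(1 - xᵢ t) (1 - xᵢ t⁻¹) = (xᵢ - t) (xᵢ - t⁻¹)`. Hence `Γₖ` maps `J N` to `J (N + 1)` and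
commutes with `ds`, so that it preserves liftability through any number of maps `ds`.

Expand a symmetric `g` in one of its variables as `g = ∑ₖ xᵢᵏ gₖ(x_j : j ≠ i)`. The identity
`∑ᵢ xᵢᴺ ∏_{j ≠ i} (xᵢ - xⱼ)⁻¹ = 1` gives `P (N + 1) g = ∑ₖ Γ_{k + N} (P N gₖ)`, so by induction on
`N` every symmetric multiple of `P N` can be lifted arbitrarily often. These multiples contain the
kernel of `ds` on `J N`, so an arbitrary `f ∈ J N` can be lifted `r` times as soon as `ds f` can be
lifted `r + 1` times: then `f` differs from an `r` times liftable element by an element of that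
kernel. Induction on `N` in steps of two concludes.
-/

/-! ### Divisibility by binomials in group algebras -/

section Binomial

open AddMonoidAlgebra

variable {k A B : Type*} [CommRing k] [AddCommGroup A] [AddCommGroup B]

lemma single_sub_single_dvd {a b a' b' : A} (h : a' - b' ∈ AddSubgroup.zmultiples (a - b)) :
    (single a 1 - single b 1 : k[A]) ∣ single a' 1 - single b' 1 := by
  let I := Ideal.span {(single a 1 - single b 1 : k[A])}
  let χ := ((Ideal.Quotient.mk I : k[A] →* k[A] ⧸ I).comp (of k A)).toHomUnits
  have χ_eq_iff (c d : A) : χ (.ofAdd c) = χ (.ofAdd d) ↔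
      (single a 1 - single b 1 : k[A]) ∣ single c 1 - single d 1 := by
    rw [Units.ext_iff, ← Ideal.mem_span_singleton]
    exact Ideal.Quotient.mk_eq_mk_iff_sub_mem _ _
  obtain ⟨n, hn : n • (a - b) = a' - b'⟩ := h
  have hab : χ (.ofAdd a) = χ (.ofAdd b) := (χ_eq_iff a b).2 dvd_rfl
  rw [← χ_eq_iff, ← div_eq_one, ← map_div, ← ofAdd_sub, ← hn, ofAdd_zsmul, map_zpow, ofAdd_sub,
    map_div, div_eq_one.2 hab, one_zpow]

lemma single_sub_single_dvd_iff {φ : A →+ B} {a b : A}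
    (hφ : φ.ker = AddSubgroup.zmultiples (a - b)) (f : k[A]) :
    single a 1 - single b 1 ∣ f ↔ mapDomainRingHom k φ f = 0 := by
  constructor
  · rintro ⟨g, rfl⟩
    have hab : φ a - φ b = 0 := by
      rw [← map_sub, ← φ.mem_ker, hφ]
      exact AddSubgroup.mem_zmultiples _
    rw [map_mul, map_sub, mapDomainRingHom_apply, mapDomainRingHom_apply, mapDomain_single,
      mapDomain_single, sub_eq_zero.1 hab, sub_self, zero_mul]
  · intro hf
    have key (g : k[A]) :
        single a 1 - single b 1 ∣ g - mapDomain (Function.invFun φ) (mapDomain φ g) := by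
      induction g using induction_linear with
      | zero => simp
      | add g h hg hh => simpa only [mapDomain_add, add_sub_add_comm] using dvd_add hg hh
      | single m c =>
        have hm : m - Function.invFun φ (φ m) ∈ AddSubgroup.zmultiples (a - b) := by
          rw [← hφ, φ.mem_ker, map_sub, Function.invFun_eq (f := φ) ⟨m, rfl⟩, sub_self]
        convert (single_sub_single_dvd (k := k) hm).mul_left (single 0 c) using 1
        simp [mul_sub, single_mul_single]
    have hf' : mapDomain φ f = 0 := hf
    simpa [hf'] using key f

/-- The endomorphism `m ↦ m - l m • d` of `A`: the projection along `d` onto the kernel of `l`,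
provided that `l d = 1`. -/
def projAlong (l : A →+ ℤ) (d : A) : A →+ A :=
  AddMonoidHom.id A - (zmultiplesHom A d).comp l

lemma projAlong_apply (l : A →+ ℤ) (d m : A) : projAlong l d m = m - l m • d := rfl

lemma ker_projAlong {l : A →+ ℤ} {d : A} (h : l d = 1) :
    (projAlong l d).ker = AddSubgroup.zmultiples d := by
  ext m
  rw [AddMonoidHom.mem_ker, projAlong_apply, sub_eq_zero, AddSubgroup.mem_zmultiples_iff]
  constructor
  · exact fun hm => ⟨l m, hm.symm⟩
  · rintro ⟨n, rfl⟩
    simp [h]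

variable [Nontrivial k]

lemma single_sub_single_dvd_single_sub_single_iff {φ : A →+ B} {a b : A}
    (hφ : φ.ker = AddSubgroup.zmultiples (a - b)) (a' b' : A) :
    (single a 1 - single b 1 : k[A]) ∣ single a' 1 - single b' 1 ↔ φ a' = φ b' := by
  rw [single_sub_single_dvd_iff hφ, map_sub, mapDomainRingHom_apply, mapDomainRingHom_apply,
    mapDomain_single, mapDomain_single, sub_eq_zero, single_left_inj one_ne_zero]

lemma prime_single_sub_single [NoZeroDivisors k[B]] {φ : A →+ B} {a b : A}
    (hφ : φ.ker = AddSubgroup.zmultiples (a - b)) (hab : a ≠ b) :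
    Prime (single a 1 - single b 1 : k[A]) := by
  refine ⟨fun h => hab ?_, fun h => ?_, fun f g => ?_⟩
  · rwa [sub_eq_zero, single_left_inj one_ne_zero] at h
  · exact one_ne_zero ((map_one _).symm.trans ((single_sub_single_dvd_iff hφ 1).1 h.dvd))
  · simp only [single_sub_single_dvd_iff hφ, map_mul, mul_eq_zero, imp_self]

end Binomial

lemma prod_dvd_of_prime {M ι : Type*} [CommMonoidWithZero M] {s : Finset ι} {p : ι → M} {z : M}
    (hp : ∀ i ∈ s, Prime (p i)) (hne : (s : Set ι).Pairwise fun i j => ¬ p i ∣ p j)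
    (hz : ∀ i ∈ s, p i ∣ z) : ∏ i ∈ s, p i ∣ z := by
  classical
  induction s using Finset.induction_on with
  | empty => simp
  | insert a s ha ih =>
    rw [Finset.coe_insert, Set.pairwise_insert_of_notMem (by simpa using ha)] at hne
    simp only [Finset.forall_mem_insert] at hp hz
    obtain ⟨c, rfl⟩ := ih hp.2 hne.1 hz.2
    have hac : p a ∣ c := (hp.1.dvd_or_dvd hz.1).resolve_left fun h => by
      obtain ⟨j, hj, hdvd⟩ := hp.1.exists_mem_finset_dvd h
      exact (hne.2 j hj).1 hdvd
    rw [Finset.prod_insert ha, mul_comm]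
    exact mul_dvd_mul_left _ hac

/-! ### Homomorphisms of Laurent polynomial rings -/

section Laurent

open AddMonoidAlgebra

/-- The integral power `xᵢᵏ` of the variable `xᵢ` of `R n`. -/
def Xpow {n : ℕ} (i : Fin n) (k : ℤ) : R n := single (Pi.single i k) 1

variable {a b n : ℕ} {S : Type*} [CommRing S]

lemma Xpow_zero (i : Fin n) : Xpow i 0 = 1 := by
  rw [Xpow, Pi.single_zero, one_def]

lemma Xpow_add (i : Fin n) (k l : ℤ) : Xpow i (k + l) = Xpow i k * Xpow i l := by
  simp [Xpow, Pi.single_add, single_mul_single]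

lemma Xpow_natCast (i : Fin n) (k : ℕ) : Xpow i k = X i ^ k := by
  simp [Xpow, X, single_pow, ← Pi.single_smul]

lemma single_eq_prod_Xpow (m : Fin n → ℤ) : (single m 1 : R n) = ∏ i, Xpow i (m i) := by
  calc single m 1 = of ℤ (Fin n → ℤ) (.ofAdd (∑ i, Pi.single i (m i))) := by
        rw [Finset.univ_sum_single]; rfl
    _ = ∏ i, Xpow i (m i) := by rw [ofAdd_sum, map_prod]; rfl

lemma map_Xpow_eq_map_Xpow {φ : R a →+* S} {ψ : R b →+* S} {i : Fin a} {j : Fin b}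
    (h : φ (X i) = ψ (X j)) (k : ℤ) : φ (Xpow i k) = ψ (Xpow j k) := by
  let pow {c : ℕ} (θ : R c →+* S) (l : Fin c) : Multiplicative ℤ →* S :=
    { toFun := fun k => θ (Xpow l k.toAdd)
      map_one' := by rw [toAdd_one, Xpow_zero, map_one]
      map_mul' := fun k k' => by rw [toAdd_mul, Xpow_add, map_mul] }
  exact DFunLike.congr_fun (MonoidHom.ext_mint (f := pow φ i) (g := pow ψ j) h) (.ofAdd k)

lemma laurentHom_ext {φ ψ : R n →+* S} (h : ∀ i, φ (X i) = ψ (X i)) : φ = ψ := by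
  refine ringHom_ext (fun c => ?_) fun m => ?_
  · exact DFunLike.congr_fun
      (Subsingleton.elim (φ.comp singleZeroRingHom) (ψ.comp singleZeroRingHom)) c
  · simp only [single_eq_prod_Xpow, map_prod, map_Xpow_eq_map_Xpow (h _)]

lemma X_injective : Function.Injective (X : Fin n → R n) := fun i j h => by
  by_contra hij
  have hexp : (Pi.single i 1 : Fin n → ℤ) = Pi.single j 1 := (single_left_inj one_ne_zero).1 h
  simpa [hij] using congr_fun hexp i

lemma permHom_X (w : Equiv.Perm (Fin n)) (i : Fin n) : permHom w (X i) = X (w i) := by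
  rw [permHom, X, mapDomainRingHom_apply, mapDomain_single, X]
  congr 1
  ext j
  simp [permExp, Pi.single_apply, Equiv.symm_apply_eq]

lemma permHom_Xpow (w : Equiv.Perm (Fin n)) (i : Fin n) (k : ℤ) :
    permHom w (Xpow i k) = Xpow (w i) k :=
  map_Xpow_eq_map_Xpow (ψ := RingHom.id (R n)) (permHom_X w i) k

/-- The homomorphism of exponent groups underlying `face i`: inserting the exponent `0` at `i`. -/
def faceExp {N : ℕ} (i : Fin (N + 1)) : (Fin N → ℤ) →+ (Fin (N + 1) → ℤ) :=
  AddMonoidHom.mk' (fun m => i.insertNth (0 : ℤ) m) fun m m' => by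
    rw [← Fin.insertNth_add, add_zero]

/-- The homomorphism `R N → R (N + 1)` which leaves out the `i`-th variable of the target,
`xⱼ ↦ x_{i.succAbove j}`. -/
def face {N : ℕ} (i : Fin (N + 1)) : R N →+* R (N + 1) := mapDomainRingHom ℤ (faceExp i)

lemma face_X (i : Fin (n + 1)) (j : Fin n) : face i (X j) = X (i.succAbove j) := by
  rw [face, X, mapDomainRingHom_apply, mapDomain_single, X]
  congr 1
  ext l
  cases l using i.succAboveCases <;> simp [faceExp, Pi.single_apply]

end Laurent

/-! ### The rings `J n` -/

section Evaluation

open AddMonoidAlgebra Fin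

variable {N : ℕ}

/-- The map `dsₙ` for `n = N + 2`, with its target written as `R N`. -/
def dsR (N : ℕ) : R (N + 2) →+* R N := ds (N + 2)

/-- The evaluation `evₙ` for `n = N + 2`, with its target written as the group algebra of
`ℤ^N × ℤ`. -/
def evR (N : ℕ) : R (N + 2) →+* ℤ[(Fin N → ℤ) × ℤ] := ev (N + 2)

/-- The inclusion of `ℤ[x₁^{±1}, …, x_N^{±1}]` into `ℤ[x₁^{±1}, …, x_N^{±1}, t^{±1}]`. -/
def incl (N : ℕ) : R N →+* ℤ[(Fin N → ℤ) × ℤ] :=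
  mapDomainRingHom ℤ (AddMonoidHom.inl (Fin N → ℤ) ℤ)

lemma incl_injective : Function.Injective (incl N) :=
  mapDomain_injective fun _ _ h => congr_arg Prod.fst h

lemma evExp_add_two_apply (m : Fin (N + 2) → ℤ) : evExp (N + 2) m =
    (fun i : Fin N => m i.castSucc.castSucc, m (last N).castSucc - m (last (N + 1))) :=
  Prod.ext rfl <| by
    simp only [evExp, AddMonoidHom.mk'_apply]
    exact dif_pos (by omega)

lemma evR_single (m : Fin (N + 2) → ℤ) (c : ℤ) : evR N (single m c) =
    single (fun i => m i.castSucc.castSucc, m (last N).castSucc - m (last (N + 1))) c := by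
  rw [← evExp_add_two_apply, evR, ev, mapDomainRingHom_apply, mapDomain_single]

lemma evR_X_castSucc_castSucc (i : Fin N) : evR N (X i.castSucc.castSucc) = incl N (X i) := by
  rw [X, evR_single, X, incl, mapDomainRingHom_apply, mapDomain_single]
  congr 1
  ext <;> simp [Pi.single_apply]

lemma evR_X_castSucc_last : evR N (X (last N).castSucc) = single (0, 1) 1 := by
  rw [X, evR_single]
  congr 1
  ext <;> simp

lemma evR_X_last : evR N (X (last (N + 1))) = single (0, -1) 1 := by
  rw [X, evR_single]
  congr 1
  ext <;> simp

lemma dsR_eq_comp_evR : dsR N = (mapDomainRingHom ℤ (AddMonoidHom.fst _ _)).comp (evR N) := by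
  rw [evR, ev, ← mapDomainRingHom_comp]
  rfl

lemma dsR_of_evR_eq {f : R (N + 2)} {g : R N} (h : evR N f = incl N g) : dsR N f = g := by
  rw [dsR_eq_comp_evR, RingHom.comp_apply, h, incl, ← RingHom.comp_apply, ← mapDomainRingHom_comp,
    AddMonoidHom.fst_comp_inl, mapDomainRingHom_id, RingHom.id_apply]

lemma dsR_X_castSucc_castSucc (i : Fin N) : dsR N (X i.castSucc.castSucc) = X i :=
  dsR_of_evR_eq (evR_X_castSucc_castSucc i)

lemma dsR_X_castSucc_last : dsR N (X (last N).castSucc) = 1 := by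
  simp [dsR_eq_comp_evR, evR_X_castSucc_last, one_def]

lemma dsR_X_last : dsR N (X (last (N + 1))) = 1 := by
  simp [dsR_eq_comp_evR, evR_X_last, one_def]

lemma mem_J_iff {f : R (N + 2)} : f ∈ J (N + 2) ↔ SymmP f ∧ evR N f = incl N (dsR N f) := by
  refine and_congr_right fun _ => ⟨fun h => ?_, fun h _ => ⟨dsR N f, h.symm⟩⟩
  obtain ⟨g, hg : incl N g = evR N f⟩ := h (by omega)
  rw [dsR_of_evR_eq hg.symm, hg]

lemma mem_J_of_evR_eq {f : R (N + 2)} {g : R N} (hf : SymmP f) (h : evR N f = incl N g) :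
    f ∈ J (N + 2) :=
  mem_J_iff.2 ⟨hf, by rw [dsR_of_evR_eq h, h]⟩

lemma exists_perm_succAbove {n : ℕ} (i i' : Fin (n + 1)) (u : Equiv.Perm (Fin n)) :
    ∃ w : Equiv.Perm (Fin (n + 1)), w i = i' ∧ ∀ j, w (i.succAbove j) = i'.succAbove (u j) :=
  ⟨(finSuccEquiv' i).trans ((Equiv.optionCongr u).trans (finSuccEquiv' i').symm), by simp, by simp⟩

lemma symmP_dsR {f : R (N + 2)} (hf : SymmP f) : SymmP (dsR N f) := fun w => by
  obtain ⟨w₁, h₁, hw₁⟩ := exists_perm_succAbove (last N) (last N) w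
  obtain ⟨w₂, h₂, hw₂⟩ := exists_perm_succAbove (last (N + 1)) (last (N + 1)) w₁
  simp only [succAbove_last] at hw₁ hw₂
  have hcomm : (permHom w).comp (dsR N) = (dsR N).comp (permHom w₂) := by
    refine laurentHom_ext ?_
    simp [forall_fin_succ', permHom_X, hw₁, hw₂, h₁, h₂, dsR_X_castSucc_castSucc,
      dsR_X_castSucc_last, dsR_X_last]
  rw [← RingHom.comp_apply, hcomm, RingHom.comp_apply, hf w₂]

lemma exists_perm_exchange_last_pairs (M : ℕ) : ∃ σ : Equiv.Perm (Fin (M + 4)),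
    (∀ i : Fin M, σ i.castSucc.castSucc.castSucc.castSucc = i.castSucc.castSucc.castSucc.castSucc) ∧
    σ (last M).castSucc.castSucc.castSucc = (last (M + 2)).castSucc ∧
    σ (last (M + 1)).castSucc.castSucc = last (M + 3) ∧
    σ (last (M + 2)).castSucc = (last M).castSucc.castSucc.castSucc ∧
    σ (last (M + 3)) = (last (M + 1)).castSucc.castSucc := by
  refine ⟨Equiv.swap (last M).castSucc.castSucc.castSucc (last (M + 2)).castSucc *
    Equiv.swap (last (M + 1)).castSucc.castSucc (last (M + 3)), fun i => ?_, ?_⟩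
  · have := i.isLt
    grind [Equiv.Perm.mul_apply, Equiv.swap_apply_of_ne_of_ne, val_castSucc]
  · simp [Equiv.swap_apply_def, Fin.ext_iff]

lemma dsR_mem_J {f : R (N + 2)} (hf : f ∈ J (N + 2)) : dsR N f ∈ J N := by
  refine ⟨symmP_dsR hf.1, fun hN => ?_⟩
  obtain ⟨M, rfl⟩ := Nat.exists_eq_add_of_le' hN
  obtain ⟨σ, hσ, hσa, hσb, hσc, hσd⟩ := exists_perm_exchange_last_pairs M
  let β : ℤ[(Fin (M + 2) → ℤ) × ℤ] →+* ℤ[(Fin M → ℤ) × ℤ] :=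
    mapDomainRingHom ℤ (AddMonoidHom.prodMap (resExp (M + 2)) (AddMonoidHom.id ℤ))
  have hβ (g : R (M + 2)) : β (incl (M + 2) g) = incl M (dsR M g) := by
    have : β.comp (incl (M + 2)) = (incl M).comp (dsR M) := by
      simp only [β, incl, dsR, ds, ← mapDomainRingHom_comp]
      rfl
    exact DFunLike.congr_fun this g
  have hβt (k : ℤ) : β (single (0, k) 1) = single (0, k) 1 := by simp [β]
  -- The variable `t` of `ev (ds f)` may be taken for that of `ev f` by symmetry of `f`.
  have hcomm : (evR M).comp (dsR (M + 2)) = β.comp ((evR (M + 2)).comp (permHom σ)) := by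
    refine laurentHom_ext ?_
    simp [forall_fin_succ', permHom_X, hσ, hσa, hσb, hσc, hσd, hβ, hβt, dsR_X_castSucc_castSucc,
      dsR_X_castSucc_last, dsR_X_last, evR_X_castSucc_castSucc, evR_X_castSucc_last, evR_X_last]
  have hev : evR M (dsR (M + 2) f) = incl M (dsR M (dsR (M + 2) f)) := by
    rw [← RingHom.comp_apply, hcomm, RingHom.comp_apply, RingHom.comp_apply, hf.1 σ,
      (mem_J_iff.1 hf).2, hβ]
  exact (mem_J_iff.2 ⟨symmP_dsR hf.1, hev⟩).2 hN

lemma ker_evExp : (evExp (N + 2)).ker = AddSubgroup.zmultiples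
    (Pi.single (last N).castSucc 1 + Pi.single (last (N + 1)) 1) := by
  ext m
  rw [AddMonoidHom.mem_ker, AddSubgroup.mem_zmultiples_iff, evExp_add_two_apply]
  constructor
  · intro h
    obtain ⟨h₁, h₂⟩ := Prod.ext_iff.1 h
    refine ⟨m (last (N + 1)), funext <| forall_fin_succ'.2 ⟨forall_fin_succ'.2 ⟨?_, ?_⟩, ?_⟩⟩
    · exact fun i => by simpa using (congr_fun h₁ i).symm
    · simpa using (sub_eq_zero.1 h₂).symm
    · simp
  · rintro ⟨k, rfl⟩
    ext <;> simp

end Evaluation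

/-! ### The kernel of `ds` on `J` -/

section Kernel

open AddMonoidAlgebra Fin

lemma prod_lt_comp_perm {M : Type*} [CommMonoid M] {n : ℕ} {f : Fin n → Fin n → M}
    (hf : ∀ i j, f i j = f j i) (w : Equiv.Perm (Fin n)) :
    ∏ p : Fin n × Fin n with p.1 < p.2, f (w p.1) (w p.2) =
      ∏ p : Fin n × Fin n with p.1 < p.2, f p.1 p.2 := by
  have key (g : Sym2 (Fin n) → M) : ∏ p : Fin n × Fin n with p.1 < p.2, g s(p.1, p.2) =
      ∏ z : Sym2 (Fin n) with ¬ z.IsDiag, g z := by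
    have h := Finset.sum_sym2_filter_not_isDiag (M := Additive M) Finset.univ g
    rw [Finset.sym2_univ] at h
    refine Eq.trans (Finset.prod_congr ?_ fun _ _ => rfl) h.symm
    ext p
    simpa using ne_of_lt
  let g : Sym2 (Fin n) → M := Sym2.lift ⟨f, hf⟩
  calc _ = ∏ z : Sym2 (Fin n) with ¬ z.IsDiag, g (z.map w) := key (fun z => g (z.map w))
    _ = ∏ z : Sym2 (Fin n) with ¬ z.IsDiag, g z := by
      refine Finset.prod_nbij' (Sym2.map w) (Sym2.map w.symm) ?_ ?_ ?_ ?_ ?_ <;>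
        simp [Sym2.isDiag_map, Sym2.map_map, w.injective, w.symm.injective]
    _ = _ := (key g).symm

lemma symmP_P (n : ℕ) : SymmP (P n) := fun w => by
  simp only [P, map_prod, map_sub, map_one, map_mul, permHom_X]
  exact prod_lt_comp_perm (f := fun i j => (1 - X i * X j : R n)) (fun i j => by rw [mul_comm]) w

lemma P_eq_one {n : ℕ} [Subsingleton (Fin n)] : P n = 1 :=
  Finset.prod_eq_one fun _ hp =>
    absurd (Subsingleton.elim _ _) (Finset.mem_filter.1 hp).2.ne

lemma prod_lt_succ {M : Type*} [CommMonoid M] {n : ℕ} (f : Fin (n + 1) → Fin (n + 1) → M) :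
    ∏ p : Fin (n + 1) × Fin (n + 1) with p.1 < p.2, f p.1 p.2 =
      (∏ j, f (castSucc j) (last n)) *
        ∏ p : Fin n × Fin n with p.1 < p.2, f p.1.castSucc p.2.castSucc := by
  simp only [Finset.prod_filter, Fintype.prod_prod_type_right, prod_univ_castSucc,
    castSucc_lt_castSucc_iff, castSucc_lt_last, (le_last _).not_gt, if_true, if_false,
    mul_one]
  rw [mul_comm]

lemma one_sub_X_mul_X {n : ℕ} (i j : Fin n) :
    (1 - X i * X j : R n) = single 0 1 - single (Pi.single i 1 + Pi.single j 1) 1 := by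
  rw [X, X, single_mul_single, one_mul, one_def]

lemma single_add_single_mem_zmultiples {n : ℕ} {i j k l : Fin n} (hij : i < j) (hkl : k < l)
    (h : (Pi.single k 1 + Pi.single l 1 : Fin n → ℤ) ∈
      AddSubgroup.zmultiples (Pi.single i 1 + Pi.single j 1)) : i = k ∧ j = l := by
  obtain ⟨c, hc⟩ := AddSubgroup.mem_zmultiples_iff.1 h
  have eval (m : Fin n) := congr_fun hc m
  simp only [Pi.smul_apply, Pi.add_apply, Pi.single_apply, smul_eq_mul] at eval
  have hi := eval i
  have hj := eval j
  have hl := eval l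
  clear eval hc h
  grind

lemma ker_projAlong_add {n : ℕ} {i j : Fin n} (h : i ≠ j) :
    (projAlong (Pi.evalAddMonoidHom _ i) (Pi.single i 1 + Pi.single j 1 : Fin n → ℤ)).ker =
      AddSubgroup.zmultiples (0 - (Pi.single i 1 + Pi.single j 1)) := by
  rw [zero_sub, AddSubgroup.zmultiples_neg, ker_projAlong]
  simp [h]

lemma prime_one_sub_X_mul_X {n : ℕ} {i j : Fin n} (h : i ≠ j) : Prime (1 - X i * X j : R n) := by
  rw [one_sub_X_mul_X]
  refine prime_single_sub_single (ker_projAlong_add h) fun h0 => ?_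
  simpa [h] using congr_fun h0 i

lemma one_sub_X_mul_X_dvd {n : ℕ} {i j k l : Fin n} (hij : i < j) (hkl : k < l)
    (h : (1 - X i * X j : R n) ∣ 1 - X k * X l) : i = k ∧ j = l := by
  rw [one_sub_X_mul_X, one_sub_X_mul_X,
    single_sub_single_dvd_single_sub_single_iff (ker_projAlong_add hij.ne), map_zero, eq_comm,
    ← AddMonoidHom.mem_ker, ker_projAlong_add hij.ne, zero_sub, AddSubgroup.zmultiples_neg] at h
  exact single_add_single_mem_zmultiples hij hkl h

lemma prod_lt_dvd {M : Type*} [CommMonoidWithZero M] {n : ℕ} {p : Fin n → Fin n → M} {z : M}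
    (hp : ∀ i j, i < j → Prime (p i j))
    (hne : ∀ i j k l, i < j → k < l → p i j ∣ p k l → i = k ∧ j = l)
    (hz : ∀ i j, i < j → p i j ∣ z) : ∏ q : Fin n × Fin n with q.1 < q.2, p q.1 q.2 ∣ z := by
  have hlt {q : Fin n × Fin n} (hq : q ∈ Finset.univ.filter fun q => q.1 < q.2) : q.1 < q.2 :=
    (Finset.mem_filter.1 hq).2
  exact prod_dvd_of_prime (fun q hq => hp _ _ (hlt hq))
    (fun q hq r hr hqr hdvd => hqr (Prod.ext_iff.2 (hne _ _ _ _ (hlt hq) (hlt hr) hdvd)))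
    fun q hq => hz _ _ (hlt hq)

lemma P_dvd {n : ℕ} {f : R n} (h : ∀ i j, i < j → 1 - X i * X j ∣ f) : P n ∣ f :=
  prod_lt_dvd (p := fun i j => 1 - X i * X j) (fun _ _ hij => prime_one_sub_X_mul_X hij.ne)
    (fun _ _ _ _ hij hkl => one_sub_X_mul_X_dvd hij hkl) h

lemma P_ne_zero (n : ℕ) : P n ≠ 0 :=
  Finset.prod_ne_zero_iff.2 fun _ hp =>
    (prime_one_sub_X_mul_X (Finset.mem_filter.1 hp).2.ne).ne_zero

lemma exists_perm_apply_eq {α : Type*} {a b i j : α} (hab : a ≠ b) (hij : i ≠ j) :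
    ∃ w : Equiv.Perm α, w a = i ∧ w b = j := by
  classical
  refine ⟨Equiv.swap (Equiv.swap a i b) j * Equiv.swap a i, ?_, by simp⟩
  grind [Equiv.Perm.mul_apply, Equiv.swap_apply_of_ne_of_ne, Equiv.swap_apply_left]

lemma SymmP.mul {n : ℕ} {f g : R n} (hf : SymmP f) (hg : SymmP g) : SymmP (f * g) := fun w => by
  rw [map_mul, hf w, hg w]

lemma SymmP.of_mul {n : ℕ} {f g : R n} (hf : SymmP f) (hf₀ : f ≠ 0) (h : SymmP (f * g)) :
    SymmP g := fun w =>
  mul_left_cancel₀ hf₀ <| by rw [← h w, map_mul, hf w]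

lemma exists_eq_P_mul_of_dsR_eq_zero {N : ℕ} {f : R (N + 2)} (hf : f ∈ J (N + 2))
    (h : dsR N f = 0) : ∃ g, SymmP g ∧ f = P (N + 2) * g := by
  have hlast : 1 - X (last N).castSucc * X (last (N + 1)) ∣ f := by
    rw [one_sub_X_mul_X, single_sub_single_dvd_iff (φ := evExp (N + 2))]
    · change evR N f = 0
      rw [(mem_J_iff.1 hf).2, h, map_zero]
    · rw [zero_sub, AddSubgroup.zmultiples_neg, ker_evExp]
  have hdvd (i j : Fin (N + 2)) (hij : i < j) : 1 - X i * X j ∣ f := by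
    obtain ⟨w, hi, hj⟩ := exists_perm_apply_eq (castSucc_lt_last (last N)).ne hij.ne
    simpa [hf.1 w, permHom_X, hi, hj] using map_dvd (permHom w) hlast
  obtain ⟨g, rfl⟩ := P_dvd hdvd
  exact ⟨g, (symmP_P _).of_mul (P_ne_zero _) hf.1, rfl⟩

end Kernel

/-! ### Alternating Laurent polynomials -/

section Vandermonde

open AddMonoidAlgebra Equiv.Perm
open Matrix hiding single

lemma X_sub_X {n : ℕ} (i j : Fin n) :
    (X i - X j : R n) = single (Pi.single i 1) 1 - single (Pi.single j 1) 1 := rfl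

lemma ker_projAlong_sub {n : ℕ} {i j : Fin n} (h : i ≠ j) :
    (projAlong (Pi.evalAddMonoidHom _ i) (Pi.single i 1 - Pi.single j 1 : Fin n → ℤ)).ker =
      AddSubgroup.zmultiples (Pi.single i 1 - Pi.single j 1) :=
  ker_projAlong (by simp [h])

lemma X_sub_X_dvd {n : ℕ} {i j k l : Fin n} (hij : i < j) (hkl : k < l)
    (h : (X j - X i : R n) ∣ X l - X k) : i = k ∧ j = l := by
  rw [X_sub_X, X_sub_X, single_sub_single_dvd_single_sub_single_iff (ker_projAlong_sub hij.ne'),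
    projAlong_apply, projAlong_apply] at h
  have eval (m : Fin n) := congr_fun h m
  simp only [Pi.evalAddMonoidHom_apply, Pi.smul_apply, Pi.sub_apply, Pi.single_apply,
    smul_eq_mul] at eval
  have hi := eval i
  have hk := eval k
  have hl := eval l
  clear eval h
  grind

lemma prime_X_sub_X {n : ℕ} {i j : Fin n} (h : i ≠ j) : Prime (X i - X j : R n) :=
  prime_single_sub_single (ker_projAlong_sub h) fun h' => by simpa [h] using congr_fun h' i

lemma X_sub_X_dvd_of_permHom_swap {n : ℕ} {i j : Fin n} {f : R n} (h : i ≠ j)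
    (hf : permHom (Equiv.swap i j) f = -f) : X i - X j ∣ f := by
  set φ := projAlong (Pi.evalAddMonoidHom _ i) (Pi.single i 1 - Pi.single j 1 : Fin n → ℤ)
  have hφ : φ.comp (permExp (Equiv.swap i j)) = φ := by
    ext m l
    simp only [φ, projAlong_apply, permExp, AddMonoidHom.comp_apply, AddMonoidHom.mk'_apply,
      Pi.evalAddMonoidHom_apply, Function.comp_apply, Pi.sub_apply, Pi.smul_apply, smul_eq_mul,
      Equiv.symm_swap, Pi.single_apply]
    rcases eq_or_ne l i with rfl | hi
    · simp [h]
    rcases eq_or_ne l j with rfl | hj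
    · simp [h.symm]; ring
    · simp [hi, hj, Equiv.swap_apply_of_ne_of_ne]
  have : CharZero (R n) :=
    charZero_of_injective_ringHom (f := (singleZeroRingHom : ℤ →+* R n)) single_right_injective
  rw [X_sub_X, single_sub_single_dvd_iff (ker_projAlong_sub h), ← CharZero.eq_neg_self_iff,
    ← map_neg, ← hf, permHom, ← RingHom.comp_apply, ← mapDomainRingHom_comp, hφ]

lemma det_vandermonde_eq_prod_lt {S : Type*} [CommRing S] {n : ℕ} (v : Fin n → S) :
    (vandermonde v).det = ∏ p : Fin n × Fin n with p.1 < p.2, (v p.2 - v p.1) := by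
  simp only [det_vandermonde, Finset.prod_filter, Fintype.prod_prod_type, ← Finset.filter_lt_eq_Ioi]

lemma det_vandermonde_comp_perm {S : Type*} [CommRing S] {n : ℕ} (v : Fin n → S)
    (w : Equiv.Perm (Fin n)) :
    (vandermonde (v ∘ w)).det = sign w * (vandermonde v).det :=
  det_permute w (vandermonde v)

/-- The Vandermonde determinant `∏_{i < j} (xⱼ - xᵢ)`. -/
def vdm (n : ℕ) : R n := (vandermonde X).det

lemma map_vdm {S : Type*} [CommRing S] {n : ℕ} (φ : R n →+* S) :
    φ (vdm n) = (vandermonde fun i => φ (X i)).det := by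
  rw [vdm, RingHom.map_det, RingHom.mapMatrix_apply]
  congr 1
  ext
  simp [vandermonde_apply]

lemma permHom_vdm {n : ℕ} (w : Equiv.Perm (Fin n)) :
    permHom w (vdm n) = sign w * vdm n := by
  simp only [map_vdm, permHom_X]
  exact det_vandermonde_comp_perm X w

lemma vdm_ne_zero (n : ℕ) : vdm n ≠ 0 := det_vandermonde_ne_zero_iff.2 X_injective

/-- `f` is alternating: permuting the variables by `w` multiplies `f` by the sign of `w`. -/
def Alternating {n : ℕ} (f : R n) : Prop :=
  ∀ w : Equiv.Perm (Fin n), permHom w f = sign w * f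

lemma Alternating.vdm_dvd {n : ℕ} {f : R n} (hf : Alternating f) : vdm n ∣ f := by
  rw [vdm, det_vandermonde_eq_prod_lt]
  refine prod_lt_dvd (p := fun i j => X j - X i) (fun i j hij => prime_X_sub_X hij.ne')
    (fun _ _ _ _ hij hkl => X_sub_X_dvd hij hkl)
    fun i j hij => X_sub_X_dvd_of_permHom_swap hij.ne' ?_
  rw [hf, sign_swap hij.ne']
  simp

lemma symmP_of_alternating_vdm_mul {n : ℕ} {f : R n} (h : Alternating (vdm n * f)) :
    SymmP f := fun w => by
  have := h w
  rw [map_mul, permHom_vdm, mul_assoc] at this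
  have hs : IsUnit ((sign w : ℤ) : R n) := (sign w).isUnit.map (Int.castRingHom (R n))
  exact mul_left_cancel₀ (vdm_ne_zero n) (hs.mul_left_cancel this)

variable {S : Type*} [CommRing S] {n : ℕ}

/-- The cofactor of the entry `vᵢⁿ` in the Vandermonde matrix of `v₀, …, vₙ`. -/
def vdmCofactor (v : Fin (n + 1) → S) (i : Fin (n + 1)) : S :=
  (-1) ^ (i + n : ℕ) * (vandermonde (v ∘ i.succAbove)).det

lemma sum_pow_mul_vdmCofactor (v : Fin (n + 1) → S) :
    ∑ i, v i ^ n * vdmCofactor v i = (vandermonde v).det := by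
  rw [det_succ_column _ (Fin.last n)]
  refine Finset.sum_congr rfl fun i _ => ?_
  have hsub : (vandermonde v).submatrix i.succAbove (Fin.last n).succAbove =
      vandermonde (v ∘ i.succAbove) := by
    ext
    simp [vandermonde_apply]
  rw [hsub, vandermonde_apply, Fin.val_last, vdmCofactor]
  ring

lemma prod_sub_mul_vdmCofactor (v : Fin (n + 1) → S) (i : Fin (n + 1)) :
    (∏ j, (v i - v (i.succAbove j))) * vdmCofactor v i = (vandermonde v).det := by
  have hneg : ∏ j, (v (i.succAbove j) - v i) = (-1) ^ n * ∏ j, (v i - v (i.succAbove j)) := by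
    simp_rw [← neg_sub (v i), Finset.prod_neg, Finset.card_univ, Fintype.card_fin]
  have hperm := det_vandermonde_comp_perm v i.cycleRange.symm
  rw [det_vandermonde, Fin.prod_univ_succ, Fin.prod_Ioi_zero] at hperm
  simp only [Fin.prod_Ioi_succ, Function.comp_apply, Fin.cycleRange_symm_zero,
    Fin.cycleRange_symm_succ, sign_symm, Fin.sign_cycleRange] at hperm
  calc (∏ j, (v i - v (i.succAbove j))) * vdmCofactor v i
      = (-1) ^ (i : ℕ) * ((∏ j, (v (i.succAbove j) - v i)) *
          ∏ j, ∏ l ∈ Finset.Ioi j, (v (i.succAbove l) - v (i.succAbove j))) := by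
        simp only [vdmCofactor, det_vandermonde, Function.comp_apply, hneg]
        ring
    _ = (vandermonde v).det := by
        rw [hperm, ← mul_assoc]
        simp [← mul_pow]

end Vandermonde

/-! ### The operators `gamma k` -/

section Gamma

open AddMonoidAlgebra Fin
open Equiv.Perm (sign)

variable {N : ℕ}

/-- The product `∏_{j ≠ i} (1 - xᵢ xⱼ)`. -/
def prodOneSub (i : Fin (N + 1)) : R (N + 1) := ∏ j, (1 - X i * X (i.succAbove j))

/-- The product `∏_{j ≠ i} (xᵢ - xⱼ)`. -/
def prodSub (i : Fin (N + 1)) : R (N + 1) := ∏ j, (X i - X (i.succAbove j))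

lemma prodSub_mul_vdmCofactor (i : Fin (N + 1)) :
    prodSub i * vdmCofactor X i = vdm (N + 1) :=
  prod_sub_mul_vdmCofactor X i

lemma prodSub_ne_zero (i : Fin (N + 1)) : prodSub i ≠ 0 := fun h =>
  vdm_ne_zero (N + 1) <| by rw [← prodSub_mul_vdmCofactor i, h, zero_mul]

lemma exists_perm_apply_succAbove (w : Equiv.Perm (Fin (N + 1))) (i : Fin (N + 1)) :
    ∃ u : Equiv.Perm (Fin N), ∀ j, w (i.succAbove j) = (w i).succAbove (u j) := by
  have hw (x : Fin (N + 1)) : x ≠ i ↔ w x ≠ w i := w.injective.ne_iff.symm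
  refine ⟨(finSuccAboveEquiv i).trans
    ((w.subtypeEquiv hw).trans (finSuccAboveEquiv (w i)).symm), fun j => ?_⟩
  exact congr_arg Subtype.val ((finSuccAboveEquiv (w i)).apply_symm_apply
    (w.subtypeEquiv hw (finSuccAboveEquiv i j))).symm

section Permutation

variable (w : Equiv.Perm (Fin (N + 1))) (i : Fin (N + 1))

lemma permHom_prodOneSub : permHom w (prodOneSub i) = prodOneSub (w i) := by
  obtain ⟨u, hu⟩ := exists_perm_apply_succAbove w i
  simp only [prodOneSub, map_prod, map_sub, map_one, map_mul, permHom_X, hu]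
  exact Equiv.prod_comp u fun j => 1 - X (w i) * X ((w i).succAbove j)

lemma permHom_prodSub : permHom w (prodSub i) = prodSub (w i) := by
  obtain ⟨u, hu⟩ := exists_perm_apply_succAbove w i
  simp only [prodSub, map_prod, map_sub, permHom_X, hu]
  exact Equiv.prod_comp u fun j => X (w i) - X ((w i).succAbove j)

lemma permHom_vdmCofactor : permHom w (vdmCofactor X i) = sign w * vdmCofactor X (w i) :=
  mul_left_cancel₀ (prodSub_ne_zero (w i)) <| by
    calc prodSub (w i) * permHom w (vdmCofactor X i) = permHom w (vdm (N + 1)) := by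
          rw [← permHom_prodSub, ← map_mul, prodSub_mul_vdmCofactor]
      _ = prodSub (w i) * (sign w * vdmCofactor X (w i)) := by
          rw [permHom_vdm, mul_left_comm, prodSub_mul_vdmCofactor]

lemma permHom_face {f : R N} (hf : SymmP f) : permHom w (face i f) = face (w i) f := by
  obtain ⟨u, hu⟩ := exists_perm_apply_succAbove w i
  have : (permHom w).comp (face i) = (face (w i)).comp (permHom u) :=
    laurentHom_ext fun j => by simp [face_X, permHom_X, hu]
  rw [← RingHom.comp_apply, this, RingHom.comp_apply, hf u]

end Permutation

/-- The numerator `∑ᵢ xᵢᵏ f(x_j : j ≠ i) ∏_{j ≠ i} (1 - xᵢ xⱼ) Cᵢ` of `gamma k f` over the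
Vandermonde determinant, `Cᵢ` being its cofactors. -/
def gammaNum (k : ℤ) (f : R N) : R (N + 1) :=
  ∑ i, Xpow i k * face i f * prodOneSub i * vdmCofactor X i

/-- The operator `f ↦ ∑ᵢ xᵢᵏ f(x_j : j ≠ i) ∏_{j ≠ i} (1 - xᵢ xⱼ) / (xᵢ - xⱼ)` from symmetric
Laurent polynomials in `N` variables to symmetric Laurent polynomials in `N + 1` variables. The
quotient of `gammaNum k f` by the Vandermonde determinant has junk values if `f` is not
symmetric. -/
def gamma (k : ℤ) (f : R N) : R (N + 1) :=
  Function.invFun (vdm (N + 1) * ·) (gammaNum k f)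

lemma alternating_gammaNum (k : ℤ) {f : R N} (hf : SymmP f) : Alternating (gammaNum k f) :=
  fun w => by
    simp only [gammaNum, map_sum, map_mul, permHom_Xpow, permHom_face w _ hf, permHom_prodOneSub,
      permHom_vdmCofactor, mul_left_comm _ ((sign w : ℤ) : R (N + 1)), ← Finset.mul_sum]
    rw [Equiv.sum_comp w fun i => Xpow i k * face i f * prodOneSub i * vdmCofactor X i]

lemma vdm_mul_gamma (k : ℤ) {f : R N} (hf : SymmP f) :
    vdm (N + 1) * gamma k f = gammaNum k f := by
  obtain ⟨g, hg⟩ := (alternating_gammaNum k hf).vdm_dvd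
  exact Function.invFun_eq (f := (vdm (N + 1) * ·)) ⟨g, hg.symm⟩

lemma symmP_gamma (k : ℤ) {f : R N} (hf : SymmP f) : SymmP (gamma k f) :=
  symmP_of_alternating_vdm_mul <| (vdm_mul_gamma k hf).symm ▸ alternating_gammaNum k hf

lemma single_mul_single_neg : (single (0, 1) 1 * single (0, -1) 1 : ℤ[(Fin N → ℤ) × ℤ]) = 1 := by
  simp [single_mul_single, one_def, Prod.zero_eq_mk]

lemma evR_X_injective : Function.Injective fun i => evR N (X i) := by
  intro i j h
  have hexp : evExp (N + 2) (Pi.single i 1) = evExp (N + 2) (Pi.single j 1) :=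
    (single_left_inj one_ne_zero).1 (by simpa only [X, evR_single, evExp_add_two_apply] using h)
  rw [← sub_eq_zero, ← map_sub, ← AddMonoidHom.mem_ker, ker_evExp,
    AddSubgroup.mem_zmultiples_iff] at hexp
  obtain ⟨c, hc⟩ := hexp
  have hc₀ : c = 0 := by
    simpa [Finset.sum_add_distrib, Finset.sum_sub_distrib, ← Finset.mul_sum] using
      congr_arg (fun m => ∑ l, m l) hc
  rw [hc₀, zero_smul, eq_comm, sub_eq_zero] at hc
  exact X_injective (congr_arg (single · 1) hc)

lemma evR_vdm_ne_zero : evR N (vdm (N + 2)) ≠ 0 := by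
  rw [map_vdm]
  exact Matrix.det_vandermonde_ne_zero_iff.2 evR_X_injective

lemma evR_prodOneSub_last : evR N (prodOneSub (last (N + 1))) = 0 := by
  rw [prodOneSub, map_prod]
  refine Finset.prod_eq_zero (Finset.mem_univ (last N)) ?_
  rw [succAbove_last, map_sub, map_mul, map_one, evR_X_castSucc_last, evR_X_last, mul_comm,
    single_mul_single_neg, sub_self]

lemma evR_prodOneSub_castSucc_last : evR N (prodOneSub (last N).castSucc) = 0 := by
  rw [prodOneSub, map_prod]
  refine Finset.prod_eq_zero (Finset.mem_univ (last N)) ?_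
  rw [succAbove_castSucc_self, succ_last, map_sub, map_mul, map_one, evR_X_castSucc_last,
    evR_X_last, single_mul_single_neg, sub_self]

/-- The factor `(xᵢ - t) (xᵢ - t⁻¹) = (1 - xᵢ t) (1 - xᵢ t⁻¹)`, which is common to the evaluations
of `∏_{j ≠ i} (xᵢ - xⱼ)` and `∏_{j ≠ i} (1 - xᵢ xⱼ)`. -/
def tFactor (i : Fin N) : ℤ[(Fin N → ℤ) × ℤ] :=
  (incl N (X i) - single (0, 1) 1) * (incl N (X i) - single (0, -1) 1)

lemma evR_prodSub (i : Fin (N + 1)) :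
    evR (N + 1) (prodSub i.castSucc.castSucc) = incl (N + 1) (prodSub i) * tFactor i := by
  simp [prodSub, tFactor, prod_univ_castSucc, evR_X_castSucc_castSucc, evR_X_castSucc_last,
    evR_X_last, mul_assoc]

lemma evR_prodOneSub (i : Fin (N + 1)) :
    evR (N + 1) (prodOneSub i.castSucc.castSucc) = incl (N + 1) (prodOneSub i) * tFactor i := by
  simp only [prodOneSub, map_prod, prod_univ_castSucc, castSucc_succAbove_castSucc, map_sub,
    map_one, map_mul, evR_X_castSucc_castSucc, ne_eq, castSucc_ne_last,
    not_false_eq_true, succAbove_ne_last_last, evR_X_castSucc_last, evR_X_last, tFactor]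
  linear_combination (∏ j : Fin N, (1 - incl (N + 1) (X i) * incl (N + 1) (X (i.succAbove j)))) *
    (incl (N + 1) (X i) ^ 2 - 1) * single_mul_single_neg (N := N + 1)

lemma evR_face (i : Fin (N + 1)) {f : R (N + 2)} (hf : f ∈ J (N + 2)) :
    evR (N + 1) (face i.castSucc.castSucc f) = incl (N + 1) (face i (dsR N f)) := by
  let β : ℤ[(Fin N → ℤ) × ℤ] →+* ℤ[(Fin (N + 1) → ℤ) × ℤ] :=
    mapDomainRingHom ℤ (AddMonoidHom.prodMap (faceExp i) (AddMonoidHom.id ℤ))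
  have hβ (g : R N) : β (incl N g) = incl (N + 1) (face i g) := by
    have : β.comp (incl N) = (incl (N + 1)).comp (face i) := by
      simp only [β, incl, face, ← mapDomainRingHom_comp]
      rfl
    exact DFunLike.congr_fun this g
  have hβt (k : ℤ) : β (single (0, k) 1) = single (0, k) 1 := by simp [β]
  have hcomm : (evR (N + 1)).comp (face i.castSucc.castSucc) = β.comp (evR N) := by
    refine laurentHom_ext ?_
    simp [forall_fin_succ', face_X, hβ, hβt, evR_X_castSucc_castSucc, evR_X_castSucc_last,
      evR_X_last]
  rw [← RingHom.comp_apply, hcomm, RingHom.comp_apply, (mem_J_iff.1 hf).2, hβ]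

lemma evR_Xpow (i : Fin N) (k : ℤ) : evR N (Xpow i.castSucc.castSucc k) = incl N (Xpow i k) :=
  map_Xpow_eq_map_Xpow (evR_X_castSucc_castSucc i) k

lemma incl_vdm_mul_evR_gammaNum (k : ℤ) {f : R (N + 2)} (hf : f ∈ J (N + 2)) :
    incl (N + 1) (vdm (N + 1)) * evR (N + 1) (gammaNum k f) =
      evR (N + 1) (vdm (N + 3)) * incl (N + 1) (gammaNum k (dsR N f)) := by
  rw [gammaNum, gammaNum, map_sum, map_sum, sum_univ_castSucc, sum_univ_castSucc]
  simp only [map_mul, evR_prodOneSub_last, evR_prodOneSub_castSucc_last, mul_zero, zero_mul,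
    add_zero, Finset.mul_sum]
  refine Finset.sum_congr rfl fun i _ => ?_
  rw [evR_face i hf, evR_Xpow, evR_prodOneSub, ← prodSub_mul_vdmCofactor i,
    ← prodSub_mul_vdmCofactor i.castSucc.castSucc, map_mul, map_mul, evR_prodSub]
  ring

lemma evR_gamma (k : ℤ) {f : R (N + 2)} (hf : f ∈ J (N + 2)) :
    evR (N + 1) (gamma k f) = incl (N + 1) (gamma k (dsR N f)) := by
  have h := incl_vdm_mul_evR_gammaNum k hf
  rw [← vdm_mul_gamma k hf.1, ← vdm_mul_gamma k (symmP_dsR hf.1), map_mul, map_mul,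
    mul_left_comm] at h
  have hincl : incl (N + 1) (vdm (N + 1)) ≠ 0 :=
    (map_ne_zero_iff _ incl_injective).2 (vdm_ne_zero _)
  exact mul_left_cancel₀ hincl (mul_left_cancel₀ evR_vdm_ne_zero h)

lemma dsR_gamma (k : ℤ) {f : R (N + 2)} (hf : f ∈ J (N + 2)) :
    dsR (N + 1) (gamma k f) = gamma k (dsR N f) :=
  dsR_of_evR_eq (evR_gamma k hf)

lemma evR_gamma_eq_zero (k : ℤ) {f : R 1} (hf : SymmP f) : evR 0 (gamma k f) = 0 := by
  refine (mul_eq_zero_iff_left evR_vdm_ne_zero).1 ?_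
  rw [← map_mul, vdm_mul_gamma k hf, gammaNum, map_sum]
  refine Finset.sum_eq_zero fun i _ => ?_
  have hi : evR 0 (prodOneSub i) = 0 := by
    fin_cases i
    exacts [evR_prodOneSub_castSucc_last, evR_prodOneSub_last]
  simp [hi]

lemma gamma_mem_J (k : ℤ) {f : R N} (hf : f ∈ J N) : gamma k f ∈ J (N + 1) := by
  match N with
  | 0 => exact ⟨symmP_gamma k hf.1, fun h => absurd h (by omega)⟩
  | 1 => exact mem_J_of_evR_eq (symmP_gamma k hf.1) (by rw [evR_gamma_eq_zero k hf.1, map_zero])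
  | N + 2 => exact mem_J_of_evR_eq (symmP_gamma k hf.1) (evR_gamma k hf)

end Gamma

/-! ### Expansion in the last variable -/

section Expansion

open AddMonoidAlgebra Fin

variable {N : ℕ}

/-- The coefficients of a Laurent polynomial in `N + 1` variables, regarded as a Laurent polynomial
in its last variable. -/
def lastCoeff : R (N + 1) →+ (ℤ →₀ R N) :=
  (Finsupp.liftAddHom fun m => (Finsupp.singleAddHom (m (last N))).comp
    (singleAddHom (init m))).comp coeffAddEquiv.toAddMonoidHom

lemma lastCoeff_single (m : Fin (N + 1) → ℤ) (c : ℤ) :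
    lastCoeff (single m c) = Finsupp.single (m (last N)) (single (init m) c) := by
  simp [lastCoeff]

lemma single_eq_Xpow_mul_face (m : Fin (N + 1) → ℤ) (c : ℤ) :
    single m c = Xpow (last N) (m (last N)) * face (last N) (single (init m) c) := by
  rw [Xpow, face, mapDomainRingHom_apply, mapDomain_single, single_mul_single, one_mul]
  congr 1
  ext j
  cases j using lastCases <;> simp [faceExp, init]

lemma sum_Xpow_mul_face_lastCoeff (g : R (N + 1)) :
    ∑ k ∈ (lastCoeff g).support, Xpow (last N) k * face (last N) (lastCoeff g k) = g := by
  let assemble : (ℤ →₀ R N) →+ R (N + 1) := Finsupp.liftAddHom fun k =>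
    (AddMonoidHom.mulLeft (Xpow (last N) k)).comp (face (last N)).toAddMonoidHom
  have : assemble.comp lastCoeff = AddMonoidHom.id _ := addMonoidHom_ext fun m c => by
    simp [assemble, lastCoeff_single, ← single_eq_Xpow_mul_face]
  exact DFunLike.congr_fun this g

lemma symmP_lastCoeff {g : R (N + 1)} (hg : SymmP g) (k : ℤ) : SymmP (lastCoeff g k) := fun u => by
  obtain ⟨w, hlast, hw⟩ := exists_perm_succAbove (last N) (last N) u
  simp only [succAbove_last] at hw
  have key (h : R (N + 1)) : lastCoeff (permHom w h) k = permHom u (lastCoeff h k) := by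
    induction h using induction_linear with
    | zero => simp
    | add h h' ih ih' => simp only [map_add, Finsupp.add_apply, ih, ih']
    | single m c =>
      have hinit : init (m ∘ w.symm) = init m ∘ u.symm := funext fun j => congr_arg m <|
        w.symm_apply_eq.2 (by rw [hw, Equiv.apply_symm_apply])
      have hm : (m ∘ w.symm) (last N) = m (last N) := congr_arg m (w.symm_apply_eq.2 hlast.symm)
      rw [permHom, mapDomainRingHom_apply, mapDomain_single, lastCoeff_single, lastCoeff_single]
      change Finsupp.single ((m ∘ w.symm) (last N)) (single (init (m ∘ w.symm)) c) k = _
      rw [hinit, hm, Finsupp.single_apply, Finsupp.single_apply]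
      split_ifs
      · rw [permHom, mapDomainRingHom_apply, mapDomain_single]; rfl
      · rw [map_zero]
  rw [← key, hg w]

lemma sum_Xpow_mul_face {g : R (N + 1)} (hg : SymmP g) (i : Fin (N + 1)) :
    ∑ k ∈ (lastCoeff g).support, Xpow i k * face i (lastCoeff g k) = g := by
  have h := congr_arg (permHom (Equiv.swap (last N) i)) (sum_Xpow_mul_face_lastCoeff g)
  simpa only [map_sum, map_mul, permHom_Xpow, permHom_face _ _ (symmP_lastCoeff hg _),
    Equiv.swap_apply_left, hg _] using h

lemma P_succ (i : Fin (N + 1)) : P (N + 1) = prodOneSub i * face i (P N) := by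
  have hlast : P (N + 1) = prodOneSub (last N) * face (last N) (P N) := by
    simp only [P, prod_lt_succ fun i j => (1 - X i * X j : R (N + 1)), prodOneSub, map_prod,
      map_sub, map_one, map_mul, face_X, succAbove_last, mul_comm (X (last N))]
  have h := congr_arg (permHom (Equiv.swap (last N) i)) hlast
  rwa [symmP_P, map_mul, permHom_prodOneSub, permHom_face _ _ (symmP_P N),
    Equiv.swap_apply_left] at h

lemma P_mul_eq_sum_gamma {g : R (N + 1)} (hg : SymmP g) :
    P (N + 1) * g = ∑ k ∈ (lastCoeff g).support, gamma (k + N) (P N * lastCoeff g k) := by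
  refine mul_left_cancel₀ (vdm_ne_zero (N + 1)) (Eq.symm ?_)
  calc vdm (N + 1) * ∑ k ∈ (lastCoeff g).support, gamma (k + N) (P N * lastCoeff g k)
      = ∑ k ∈ (lastCoeff g).support, gammaNum (k + N) (P N * lastCoeff g k) := by
        rw [Finset.mul_sum]
        exact Finset.sum_congr rfl fun k _ =>
          vdm_mul_gamma _ ((symmP_P N).mul (symmP_lastCoeff hg k))
    _ = ∑ i, P (N + 1) * (X i ^ N * vdmCofactor X i) *
          ∑ k ∈ (lastCoeff g).support, Xpow i k * face i (lastCoeff g k) := by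
        simp only [gammaNum, Finset.mul_sum]
        rw [Finset.sum_comm]
        refine Finset.sum_congr rfl fun i _ => Finset.sum_congr rfl fun k _ => ?_
        rw [Xpow_add, Xpow_natCast, map_mul, P_succ i]
        ring
    _ = vdm (N + 1) * (P (N + 1) * g) := by
        simp only [sum_Xpow_mul_face hg, ← Finset.sum_mul, ← Finset.mul_sum,
          sum_pow_mul_vdmCofactor]
        rw [vdm]
        ring

end Expansion

/-! ### Iterated liftings through `ds` -/

section Lifting

open AddMonoidAlgebra

/-- The set `J N` as a subring of `R N`. -/
def jSubring (N : ℕ) : Subring (R N) :=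
  (⨅ w, (permHom w).eqLocus (RingHom.id (R N))) ⊓
    ⨅ _ : 2 ≤ N, (mapDomainRingHom ℤ (AddMonoidHom.inl (Fin (N - 2) → ℤ) ℤ)).range.comap (ev N)

lemma mem_jSubring {N : ℕ} {f : R N} : f ∈ jSubring N ↔ f ∈ J N := by
  simp only [jSubring, Subring.mem_inf, Subring.mem_iInf]
  rfl

/-- The subring of those elements of `J N` which can be lifted `r` times through the maps `ds`. -/
def liftable : ℕ → (N : ℕ) → Subring (R N)
  | 0, N => jSubring N
  | r + 1, N => (liftable r (N + 2)).map (dsR N)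

lemma mem_J_of_mem_liftable (r : ℕ) {N : ℕ} {f : R N} (hf : f ∈ liftable r N) : f ∈ J N := by
  induction r generalizing N with
  | zero => exact mem_jSubring.1 hf
  | succ r ih =>
    obtain ⟨f', hf', rfl⟩ := hf
    exact dsR_mem_J (ih hf')

lemma gamma_mem_liftable (k : ℤ) {r N : ℕ} {f : R N} (hf : f ∈ liftable r N) :
    gamma k f ∈ liftable r (N + 1) := by
  induction r generalizing N with
  | zero => exact mem_jSubring.2 (gamma_mem_J k (mem_jSubring.1 hf))
  | succ r ih =>
    obtain ⟨f', hf', rfl⟩ := hf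
    exact ⟨gamma k f', ih hf', dsR_gamma k (mem_J_of_mem_liftable r hf')⟩

lemma P_mul_mem_liftable (r : ℕ) {N : ℕ} {g : R N} (hg : SymmP g) : P N * g ∈ liftable r N := by
  induction N with
  | zero =>
    obtain ⟨c, rfl⟩ : ∃ c : ℤ, (c : R 0) = g :=
      ⟨uniqueRingEquiv _ g, (uniqueRingEquiv _).injective (map_intCast _ _)⟩
    rw [P_eq_one, one_mul]
    exact intCast_mem _ c
  | succ N ih =>
    rw [P_mul_eq_sum_gamma hg]
    exact sum_mem fun k _ => gamma_mem_liftable _ (ih (symmP_lastCoeff hg k))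

lemma mem_liftable_of_mem_J (r : ℕ) {N : ℕ} {f : R N} (hf : f ∈ J N) : f ∈ liftable r N := by
  induction N using Nat.twoStepInduction generalizing r with
  | zero => simpa only [P_eq_one, one_mul] using P_mul_mem_liftable r hf.1
  | one => simpa only [P_eq_one, one_mul] using P_mul_mem_liftable r hf.1
  | more N ih _ =>
    obtain ⟨f', hf', hdf'⟩ := ih (r + 1) (dsR_mem_J hf)
    have hdiff : f - f' ∈ J (N + 2) := mem_jSubring.1 <|
      sub_mem (mem_jSubring.2 hf) (mem_jSubring.2 (mem_J_of_mem_liftable r hf'))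
    obtain ⟨g, hg, hfg⟩ := exists_eq_P_mul_of_dsR_eq_zero hdiff (by rw [map_sub, hdf', sub_self])
    rw [← sub_add_cancel f f', hfg]
    exact add_mem (P_mul_mem_liftable r hg) hf'

end Lifting

theorem ds_surjective_of_thinKac_in_image_general (n : ℕ) (hn : 2 ≤ n) :
    ∀ h ∈ J (n - 2), ∃ f ∈ J n, ds n f = h := by
  intro h hh
  obtain ⟨N, rfl⟩ := Nat.exists_eq_add_of_le' hn
  obtain ⟨f, hf, hfh⟩ := mem_liftable_of_mem_J 1 hh
  exact ⟨f, mem_jSubring.1 hf, hfh⟩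

/-- Let `n ≥ 4`.  If for every symmetric Laurent polynomial
`g ∈ R_{n-2}^{S_{n-2}}` the element `(∏_{1 ≤ i < j ≤ n-2} (1 - xᵢxⱼ)) ⬝ g`
lies in the image `dsₙ(Jₙ)`, then `dsₙ : Jₙ → J_{n-2}` is surjective. -/
theorem ds_surjective_of_thinKac_in_image (n : ℕ) (hn : 4 ≤ n)
    (H : ∀ g : R (n - 2), SymmP g → ∃ f ∈ J n, ds n f = P (n - 2) * g) :
    ∀ h ∈ J (n - 2), ∃ f ∈ J n, ds n f = h :=
  ds_surjective_of_thinKac_in_image_general n (by omega)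

end
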